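/- arXiv:2311.00795 — 3 statements merged into one kernel-verified Lean document; each statement's English description precedes it below -/
import Mathlib

section
/- Let n ≥ 1 and let A and B be n×n complex Hermitian positive definite matrices. Then the trace of A⁻¹ * B is a positive real number and satisfies Re(trace(A⁻¹ * B)) ≥ n * (Re(det B) / Re(det A))^(1/n). (This is the pointwise linear-algebra content of Lemma 2.1: applying the AM–GM inequality to the eigenvalues of A⁻¹B, whose product is det B / det A.) -/
open scoped Matrix ComplexOrder

/-!
Since `A⁻¹` is positive definite it factors as `Yᴴ * Y` with `Y` invertible. The matrix
`Y * B * Yᴴ` is positive definite and similar to `A⁻¹ * B`, so the two have the same trace and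
determinant. Its eigenvalues are positive reals with sum `tr (A⁻¹ * B)` and product
`det B / det A`, and the claim is the AM–GM inequality for them.
-/

open scoped MatrixOrder in
/-- `A⁻¹ * B` need not be Hermitian, but a positive definite matrix has the same trace and
determinant. -/
lemma exists_posDef_trace_det {n : ℕ} {A B : Matrix (Fin n) (Fin n) ℂ}
    (hA : A.PosDef) (hB : B.PosDef) :
    ∃ M : Matrix (Fin n) (Fin n) ℂ,
      M.PosDef ∧ M.trace = (A⁻¹ * B).trace ∧ M.det = B.det / A.det := by
  obtain ⟨Y, hY, hAY⟩ :=
    CStarAlgebra.isStrictlyPositive_iff_eq_star_mul_self.mp hA.inv.isStrictlyPositive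
  rw [Matrix.star_eq_conjTranspose] at hAY
  refine ⟨Y * B * Yᴴ,
    hB.mul_mul_conjTranspose_same (Matrix.vecMul_injective_of_isUnit hY), ?_, ?_⟩
  · rw [hAY, Matrix.trace_mul_comm, ← Matrix.mul_assoc]
  · have h : A.det⁻¹ = Yᴴ.det * Y.det := by
      rw [← Matrix.det_mul, ← hAY, Matrix.det_nonsing_inv, Ring.inverse_eq_inv']
    rw [Matrix.det_mul, Matrix.det_mul, div_eq_mul_inv, h]
    ring

/-- Pointwise linear-algebra content of Lemma 2.1: for Hermitian positive
definite `A, B`, the trace of `A⁻¹ * B` is a positive real number and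
`Re (tr (A⁻¹ * B)) ≥ n * (Re (det B) / Re (det A))^(1/n)` (AM–GM applied to the
eigenvalues of `A⁻¹ B`, whose product is `det B / det A`). -/
theorem trace_inv_mul_ge_amgm (n : ℕ) (hn : 1 ≤ n)
    (A B : Matrix (Fin n) (Fin n) ℂ) (hA : A.PosDef) (hB : B.PosDef) :
    0 < (A⁻¹ * B).trace.re ∧ (A⁻¹ * B).trace.im = 0 ∧
      (n : ℝ) * (B.det.re / A.det.re) ^ ((1 : ℝ) / n) ≤ (A⁻¹ * B).trace.re := by
  have hn0 : 0 < n := hn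
  obtain ⟨M, hM, htr, hdet⟩ := exists_posDef_trace_det hA hB
  set e := hM.1.eigenvalues with he
  have hpos : ∀ i, 0 < e i := hM.eigenvalues_pos
  have htr' : (A⁻¹ * B).trace = ((∑ i, e i : ℝ) : ℂ) := by
    rw [← htr, hM.1.trace_eq_sum_eigenvalues]
    push_cast
    rfl
  have hdet' : B.det.re / A.det.re = ∏ i, e i := by
    have hA0 : (0 : ℂ) < A.det := hA.det_pos
    have hB0 : (0 : ℂ) < B.det := hB.det_pos
    have hAr : ((A.det.re : ℝ) : ℂ) = A.det := Complex.ext rfl (Complex.lt_def.mp hA0).2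
    have hBr : ((B.det.re : ℝ) : ℂ) = B.det := Complex.ext rfl (Complex.lt_def.mp hB0).2
    have h : ((B.det.re / A.det.re : ℝ) : ℂ) = ((∏ i, e i : ℝ) : ℂ) := by
      rw [Complex.ofReal_div, hAr, hBr, ← hdet, hM.1.det_eq_prod_eigenvalues]
      push_cast
      rfl
    exact_mod_cast h
  rw [htr', hdet', Complex.ofReal_re, Complex.ofReal_im]
  refine ⟨Finset.sum_pos (fun i _ => hpos i) ⟨⟨0, hn0⟩, Finset.mem_univ _⟩, rfl, ?_⟩
  have hnR : (0 : ℝ) < n := by exact_mod_cast hn0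
  have h := Real.geom_mean_le_arith_mean Finset.univ (fun _ : Fin n => (1 : ℝ)) e
    (fun _ _ => zero_le_one) (by simpa using hn0) (fun i _ => (hpos i).le)
  simp only [Real.rpow_one, one_mul, Finset.sum_const, Finset.card_univ, Fintype.card_fin,
    nsmul_eq_mul, mul_one, le_div_iff₀ hnR] at h
  rw [one_div, mul_comm]
  exact h
end

section
/- Let n ≥ 1, let A be an n×n complex Hermitian positive definite matrix and let H be an n×n complex Hermitian matrix. Then |Re(trace(A⁻¹ * H))| ≤ ‖H‖ · (Re(trace A))^(n-1) / Re(det A), where ‖H‖ denotes the operator norm of H acting on ℂⁿ. (This is the pointwise bound |tr_{ω_φ} η| ≤ C (n+Δφ)^{n-1} e^{-F} used to control Δ_φ F by |R| + C(n+Δφ)^{n-1}.) -/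
/-! Let `λᵢ > 0` be the eigenvalues of `A` and `vᵢ` an orthonormal basis of eigenvectors. Computing
the trace of `H * A⁻¹` in this basis gives `tr (A⁻¹ * H) = ∑ λᵢ⁻¹ ⟪vᵢ, H vᵢ⟫`
(`trace_inv_mul_eq_sum_inner`), so `|tr (A⁻¹ * H)| ≤ ‖H‖ ∑ λᵢ⁻¹`. Finally
`(∑ λᵢ⁻¹) ∏ λᵢ` is the elementary symmetric polynomial of degree `n - 1` in the `λᵢ`; it is at most
`(∑ λᵢ) ^ (n - 1) = (tr A) ^ (n - 1)` (`sum_inv_mul_prod_le`), while `∏ λᵢ = det A`. -/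

open scoped Matrix ComplexOrder

/-- The left-hand side is the elementary symmetric polynomial of degree `#s - 1`, all of whose
monomials occur in the expansion of the right-hand side. -/
lemma sum_inv_mul_prod_le {ι : Type*} (s : Finset ι) (hs : s.Nonempty) (x : ι → ℝ)
    (hx : ∀ i ∈ s, 0 < x i) :
    (∑ i ∈ s, (x i)⁻¹) * ∏ i ∈ s, x i ≤ (∑ i ∈ s, x i) ^ (s.card - 1) := by
  induction hs using Finset.Nonempty.cons_induction with
  | singleton a =>
    have := hx a (by simp)
    simp [this.ne']
  | cons a s ha hs ih =>
    have hxs : ∀ i ∈ s, 0 < x i := fun i hi => hx i (Finset.mem_cons_of_mem hi)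
    have hxa : 0 < x a := hx a (Finset.mem_cons_self a s)
    have ih := ih hxs
    have hS : 0 < ∑ i ∈ s, x i := Finset.sum_pos hxs hs
    have hP : ∏ i ∈ s, x i ≤ (∑ i ∈ s, x i) ^ s.card := by
      rw [← Finset.prod_const]
      exact Finset.prod_le_prod (fun i hi => (hxs i hi).le) fun i hi =>
        Finset.single_le_sum (fun j hj => (hxs j hj).le) hi
    obtain ⟨k, hk⟩ : ∃ k, s.card = k + 1 := ⟨s.card - 1, by have := hs.card_pos; omega⟩
    rw [Finset.sum_cons, Finset.sum_cons, Finset.prod_cons, Finset.card_cons]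
    rw [hk] at ih hP ⊢
    simp only [Nat.add_sub_cancel] at ih ⊢
    set S := ∑ i ∈ s, x i
    set P := ∏ i ∈ s, x i
    set J := ∑ i ∈ s, (x i)⁻¹
    calc ((x a)⁻¹ + J) * (x a * P) = P + x a * (J * P) := by field_simp
      _ ≤ S ^ (k + 1) + x a * S ^ k := by gcongr
      _ = (x a + S) * S ^ k := by ring
      _ ≤ (x a + S) * (x a + S) ^ k := by gcongr; linarith
      _ = (x a + S) ^ (k + 1) := by ring

/-- The trace of `A⁻¹ * H`, computed in an orthonormal eigenbasis of `A`. -/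
lemma trace_inv_mul_eq_sum_inner {n : ℕ} (A H : Matrix (Fin n) (Fin n) ℂ) (hA : A.PosDef) :
    (A⁻¹ * H).trace = ∑ i, (((hA.1.eigenvalues i)⁻¹ : ℝ) : ℂ) *
      inner ℂ (hA.1.eigenvectorBasis i)
        (Matrix.toEuclideanCLM (𝕜 := ℂ) H (hA.1.eigenvectorBasis i)) := by
  have htr (M : Matrix (Fin n) (Fin n) ℂ) :
      M.trace = LinearMap.trace ℂ _ (Matrix.toEuclideanLin M) := by
    rw [Matrix.toEuclideanLin, Matrix.toLpLin_eq_toLin, Matrix.trace_toLin_eq]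
  rw [Matrix.trace_mul_comm, htr, LinearMap.trace_eq_sum_inner _ hA.1.eigenvectorBasis]
  refine Finset.sum_congr rfl fun i _ => ?_
  rw [← inner_smul_right, ← map_smul]
  congr 1
  set v := hA.1.eigenvectorBasis i with hv
  have hev : A *ᵥ v.ofLp = hA.1.eigenvalues i • v.ofLp := hA.1.mulVec_eigenvectorBasis i
  have hne : hA.1.eigenvalues i ≠ 0 := (hA.eigenvalues_pos i).ne'
  have hinv : A⁻¹ *ᵥ v.ofLp = (hA.1.eigenvalues i)⁻¹ • v.ofLp := by
    have hu : IsUnit A.det := (Matrix.isUnit_iff_isUnit_det A).1 hA.isUnit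
    rw [eq_inv_smul_iff₀ hne, ← Matrix.mulVec_smul, ← hev, Matrix.mulVec_mulVec,
      Matrix.nonsing_inv_mul A hu, Matrix.one_mulVec]
  ext j
  simp only [Matrix.toLpLin_apply, ← Matrix.mulVec_mulVec, hinv, Matrix.ofLp_toEuclideanCLM]
  rfl

/-- Pointwise bound `|tr_{ω_φ} η| ≤ C (n+Δφ)^{n-1} e^{-F}`: for Hermitian
positive definite `A` and Hermitian `H`,
`|Re (tr (A⁻¹ * H))| ≤ ‖H‖ · (Re (tr A))^(n-1) / Re (det A)`, where `‖H‖` is the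
operator norm of `H` acting on the Euclidean space `ℂⁿ`. -/
theorem abs_trace_inv_mul_hermitian_le (n : ℕ) (hn : 1 ≤ n)
    (A H : Matrix (Fin n) (Fin n) ℂ) (hA : A.PosDef) (hH : H.IsHermitian) :
    |(A⁻¹ * H).trace.re| ≤
      ‖Matrix.toEuclideanCLM (𝕜 := ℂ) (n := Fin n) H‖ * A.trace.re ^ (n - 1) / A.det.re := by
  have hpos := hA.eigenvalues_pos
  have htr : A.trace.re = ∑ i, hA.1.eigenvalues i := by
    simp [hA.1.trace_eq_sum_eigenvalues]
  have hdet : A.det.re = ∏ i, hA.1.eigenvalues i := by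
    rw [hA.1.det_eq_prod_eigenvalues, ← RCLike.ofReal_prod]
    exact Complex.ofReal_re _
  have hdet_pos : 0 < A.det.re := hdet ▸ Finset.prod_pos fun i _ => hpos i
  have hsum : |(A⁻¹ * H).trace.re| ≤
      ‖Matrix.toEuclideanCLM (𝕜 := ℂ) (n := Fin n) H‖ * ∑ i, (hA.1.eigenvalues i)⁻¹ := by
    rw [trace_inv_mul_eq_sum_inner A H hA, Finset.mul_sum]
    refine (Complex.abs_re_le_norm _).trans ((norm_sum_le _ _).trans ?_)
    refine Finset.sum_le_sum fun i _ => ?_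
    set v := hA.1.eigenvectorBasis i with hv
    have hv1 : ‖v‖ = 1 := hA.1.eigenvectorBasis.orthonormal.1 i
    have h1 := norm_inner_le_norm (𝕜 := ℂ) v (Matrix.toEuclideanCLM (𝕜 := ℂ) H v)
    have h2 := (Matrix.toEuclideanCLM (𝕜 := ℂ) (n := Fin n) H).le_opNorm v
    rw [hv1, one_mul] at h1
    rw [hv1, mul_one] at h2
    rw [norm_mul, Complex.norm_real, Real.norm_of_nonneg (inv_pos.2 (hpos i)).le, mul_comm]
    exact mul_le_mul_of_nonneg_right (h1.trans h2) (inv_pos.2 (hpos i)).le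
  have hne : (Finset.univ : Finset (Fin n)).Nonempty := ⟨⟨0, hn⟩, Finset.mem_univ _⟩
  have hE := sum_inv_mul_prod_le Finset.univ hne hA.1.eigenvalues fun i _ => hpos i
  rw [Finset.card_univ, Fintype.card_fin, ← hdet, ← htr] at hE
  rw [le_div_iff₀ hdet_pos]
  calc _ ≤ ‖Matrix.toEuclideanCLM (𝕜 := ℂ) (n := Fin n) H‖ * (∑ i, (hA.1.eigenvalues i)⁻¹) *
        A.det.re := mul_le_mul_of_nonneg_right hsum hdet_pos.le
    _ ≤ _ := by
      rw [mul_assoc]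
      exact mul_le_mul_of_nonneg_left hE (norm_nonneg _)
end

section
/- Let ν be a finite measure on a measurable space X, let F, G : X → ℝ be measurable with G ≥ 0, and let p > 1, δ > 0 be reals. Suppose σ is a real with 0 < σ < δ and (1+σ) · ((p+1)/2) · δ/(δ−σ) ≤ p. If ∫ₓ e^{δF} dν ≤ A and ∫ₓ G^p dν ≤ B for reals A, B ≥ 0, then ∫ₓ G^{(1+σ)(p+1)/2} e^{σF} dν ≤ (ν(X) + B)^{(δ−σ)/δ} · A^{σ/δ}. (This is the Hölder-inequality step, with p' = (p+1)/2, in the proof of Theorem 1.2 bounding ∫ Φ(R)^{a p'} e^{aF} and hence the auxiliary potential ρ; note that such σ exists since (p+1)/2 < p.) -/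
/-!
With `θ = (δ - σ) / δ` and exponent `c = (1 + σ)(p + 1) / 2`, the hypothesis on `σ` says `c ≤ p θ`.
Hence `G ^ c ≤ (1 + G ^ p) ^ θ` pointwise (`rpow_le_one_add_rpow_rpow`), and Hölder's inequality
with weights `θ` and `1 - θ = σ / δ`, applied to `1 + G ^ p` and `exp (δ F)`, gives the bound.
-/


open MeasureTheory

/-- For `t ≤ 1` the number `1` lies between the two sides; for `t ≥ 1` compare exponents. -/
lemma rpow_le_one_add_rpow_rpow {t c p θ : ℝ} (ht : 0 ≤ t) (hc : 0 ≤ c) (hθ : 0 ≤ θ)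
    (h : c ≤ p * θ) : t ^ c ≤ (1 + t ^ p) ^ θ := by
  have htp : 0 ≤ t ^ p := Real.rpow_nonneg ht p
  rcases le_total t 1 with h1 | h1
  · exact (Real.rpow_le_one ht h1 hc).trans (Real.one_le_rpow (by linarith) hθ)
  · calc t ^ c ≤ t ^ (p * θ) := Real.rpow_le_rpow_of_exponent_le h1 h
      _ = (t ^ p) ^ θ := Real.rpow_mul ht p θ
      _ ≤ (1 + t ^ p) ^ θ := Real.rpow_le_rpow htp (by linarith) hθ

/-- Hölder-inequality step (with `p' = (p+1)/2`) in the proof of Theorem 1.2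
bounding `∫ Φ(R)^{a p'} e^{aF}`, with `a = 1+σ`, `ν = ω_φ^n`, `G = Φ(R)`. -/
theorem holder_step {X : Type*} [MeasurableSpace X] (ν : Measure X)
    [IsFiniteMeasure ν] (F G : X → ℝ) (hF : Measurable F) (hG : Measurable G)
    (hG0 : ∀ x, 0 ≤ G x) (p δ σ A B : ℝ) (hp : 1 < p) (hδ : 0 < δ)
    (hσ0 : 0 < σ) (hσδ : σ < δ)
    (hexp : (1 + σ) * ((p + 1) / 2) * δ / (δ - σ) ≤ p)
    (hA : 0 ≤ A) (hB : 0 ≤ B)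
    (hFint : ∫⁻ x, ENNReal.ofReal (Real.exp (δ * F x)) ∂ν ≤ ENNReal.ofReal A)
    (hGint : ∫⁻ x, ENNReal.ofReal (G x ^ p) ∂ν ≤ ENNReal.ofReal B) :
    ∫⁻ x, ENNReal.ofReal
        (G x ^ ((1 + σ) * ((p + 1) / 2)) * Real.exp (σ * F x)) ∂ν
      ≤ (ν Set.univ + ENNReal.ofReal B) ^ ((δ - σ) / δ) *
          ENNReal.ofReal A ^ (σ / δ) := by
  have hδσ : 0 < δ - σ := sub_pos.2 hσδ
  have hθ : 0 ≤ (δ - σ) / δ := by positivity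
  have hη : 0 ≤ σ / δ := by positivity
  have hsum : (δ - σ) / δ + σ / δ = 1 := by field_simp; ring
  have hc : (1 + σ) * ((p + 1) / 2) ≤ p * ((δ - σ) / δ) := by
    rw [← mul_div_assoc p, le_div_iff₀ hδ]
    exact (div_le_iff₀ hδσ).1 hexp
  have hpt : ∀ x, ENNReal.ofReal
      (G x ^ ((1 + σ) * ((p + 1) / 2)) * Real.exp (σ * F x)) ≤
      (1 + ENNReal.ofReal (G x ^ p)) ^ ((δ - σ) / δ) *
        ENNReal.ofReal (Real.exp (δ * F x)) ^ (σ / δ) := by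
    intro x
    have hGp : 0 ≤ G x ^ p := Real.rpow_nonneg (hG0 x) p
    rw [← ENNReal.ofReal_one, ← ENNReal.ofReal_add zero_le_one hGp,
      ENNReal.ofReal_rpow_of_nonneg (by linarith) hθ,
      ENNReal.ofReal_rpow_of_nonneg (Real.exp_pos _).le hη,
      ← ENNReal.ofReal_mul (by positivity), ← Real.exp_mul,
      show δ * F x * (σ / δ) = σ * F x by field_simp]
    gcongr
    exact rpow_le_one_add_rpow_rpow (hG0 x) (by positivity) hθ hc
  calc _ ≤ ∫⁻ x, (1 + ENNReal.ofReal (G x ^ p)) ^ ((δ - σ) / δ) *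
        ENNReal.ofReal (Real.exp (δ * F x)) ^ (σ / δ) ∂ν := lintegral_mono hpt
    _ ≤ (∫⁻ x, (1 + ENNReal.ofReal (G x ^ p)) ∂ν) ^ ((δ - σ) / δ) *
        (∫⁻ x, ENNReal.ofReal (Real.exp (δ * F x)) ∂ν) ^ (σ / δ) :=
      ENNReal.lintegral_mul_norm_pow_le (by fun_prop) (by fun_prop) hθ hη hsum
    _ ≤ _ := by
      rw [lintegral_add_left measurable_const, lintegral_one]
      gcongr
end
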